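/- Let p₃₁, p₃₂, p₃₃, p₄₁, p₄₂, p₄₃, c₁, c₂, c₃ be reals with cⱼ > 0. If for every 1 ≤ ℓ ≤ 6 we have Σⱼ₌₁³ Σ_{α₃+2α₄=ℓ} cⱼ p₃ⱼ^{α₃} p₄ⱼ^{α₄}/(α₃! α₄!) = 0, then p₃ⱼ = p₄ⱼ = 0 for all j ∈ {1,2,3}. -/

import Mathlib

open Finset

namespace HeatPoly
open Polynomial MeasureTheory

/-- Multiplication by `X` plus `τ` times the derivative. -/
noncomputable def T (τ : ℝ) : ℝ[X] →ₗ[ℝ] ℝ[X] :=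
  LinearMap.mulLeft ℝ (X : ℝ[X]) + τ • (Polynomial.derivative : ℝ[X] →ₗ[ℝ] ℝ[X])

/-- The heat operator `exp (τ D² / 2)` on polynomials. -/
noncomputable def E (τ : ℝ) : ℝ[X] →ₗ[ℝ] ℝ[X] :=
  (LinearMap.applyₗ (1 : ℝ[X])).comp (aeval (R := ℝ) (T τ)).toLinearMap

lemma T_apply (τ : ℝ) (Q : ℝ[X]) : T τ Q = X * Q + C τ * derivative Q := by
  simp [T, smul_eq_C_mul]

lemma E_one (τ : ℝ) : E τ 1 = 1 := by simp [E]

lemma E_X_mul (τ : ℝ) (Q : ℝ[X]) : E τ (X * Q) = X * E τ Q + C τ * derivative (E τ Q) := by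
  rw [← T_apply]; simp [E]

lemma E_C_mul (τ a : ℝ) (Q : ℝ[X]) : E τ (C a * Q) = C a * E τ Q := by
  rw [← smul_eq_C_mul, map_smul, smul_eq_C_mul]

/-- Induction principle: linear, and stable under multiplication by `X`. -/
lemma poly_ind {P : ℝ[X] → Prop} (h1 : P 1) (hadd : ∀ p q, P p → P q → P (p + q))
    (hC : ∀ a p, P p → P (C a * p)) (hX : ∀ p, P p → P (X * p)) (p : ℝ[X]) : P p := by
  have hm : ∀ n : ℕ, P (X ^ n) := by
    intro n
    induction n with
    | zero => simpa using h1
    | succ n ih => rw [pow_succ']; exact hX _ ih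
  induction p using Polynomial.induction_on' with
  | add p q hp hq => exact hadd _ _ hp hq
  | monomial n a => rw [← C_mul_X_pow_eq_monomial]; exact hC _ _ (hm n)

lemma E_derivative (τ : ℝ) (Q : ℝ[X]) : derivative (E τ Q) = E τ (derivative Q) := by
  induction Q using poly_ind with
  | h1 => simp [E_one]
  | hadd p q hp hq => simp [hp, hq]
  | hC a p hp => simp [E_C_mul, hp]
  | hX p hp =>
    simp only [E_X_mul, derivative_mul, derivative_X, derivative_C, map_add, hp,
      one_mul, zero_mul, zero_add]
    ring

lemma E_add_time (σ τ : ℝ) (Q : ℝ[X]) : E σ (E τ Q) = E (σ + τ) Q := by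
  induction Q using poly_ind with
  | h1 => simp [E_one]
  | hadd p q hp hq => simp [hp, hq]
  | hC a p hp => simp [E_C_mul, hp]
  | hX p hp =>
    simp only [E_X_mul, map_add, E_C_mul, ← E_derivative, hp]
    ring

lemma E_zero_time (Q : ℝ[X]) : E 0 Q = Q := by
  induction Q using poly_ind with
  | h1 => simp [E_one]
  | hadd p q hp hq => simp [hp, hq]
  | hC a p hp => simp [E_C_mul, hp]
  | hX p hp => simp [E_X_mul, hp]

lemma E_ne_zero {τ : ℝ} {Q : ℝ[X]} (hQ : Q ≠ 0) : E τ Q ≠ 0 := by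
  intro h
  apply hQ
  have := E_add_time (-τ) τ Q
  rw [h, neg_add_cancel, E_zero_time, map_zero] at this
  exact this.symm

lemma natDegree_E_X_pow (τ : ℝ) (n : ℕ) : (E τ (X ^ n)).natDegree ≤ n := by
  induction n with
  | zero => simp [E_one]
  | succ n ih =>
    rw [pow_succ', E_X_mul]
    refine natDegree_add_le_of_degree_le ?_ ?_
    · refine natDegree_mul_le.trans ?_
      have := natDegree_X_le (R := ℝ)
      omega
    · refine (natDegree_C_mul_le _ _).trans ((natDegree_derivative_le _).trans ?_)
      omega

lemma natDegree_E_le (τ : ℝ) (Q : ℝ[X]) : (E τ Q).natDegree ≤ Q.natDegree := by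
  conv_lhs => rw [Q.as_sum_range_C_mul_X_pow, map_sum]
  refine natDegree_sum_le_of_forall_le _ _ ?_
  intro i hi
  rw [E_C_mul]
  refine (natDegree_C_mul_le _ _).trans ((natDegree_E_X_pow τ i).trans ?_)
  have := Finset.mem_range.1 hi
  omega

/-! Gaussian integrals -/

lemma integrable_poly {b : ℝ} (hb : 0 < b) (P : ℝ[X]) :
    Integrable (fun z : ℝ => P.eval z * Real.exp (-b * z ^ 2)) := by
  induction P using Polynomial.induction_on' with
  | add p q hp hq => 
    simp only [eval_add, add_mul]
    exact hp.add hq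
  | monomial n a =>
    have h := (integrable_rpow_mul_exp_neg_mul_sq hb (s := n) (by
      have : (0:ℝ) ≤ n := n.cast_nonneg
      linarith)).const_mul a
    simpa [eval_monomial, mul_assoc, Real.rpow_natCast] using h

lemma stein {τ : ℝ} (hτ : 0 < τ) (P : ℝ[X]) :
    ∫ z : ℝ, (X * P).eval z * Real.exp (-(1 / (2 * τ)) * z ^ 2)
      = τ * ∫ z : ℝ, (derivative P).eval z * Real.exp (-(1 / (2 * τ)) * z ^ 2) := by
  have hb : 0 < 1 / (2 * τ) := by positivity
  have i1 := integrable_poly hb (derivative P)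
  have i2 := integrable_poly hb (X * P)
  have i3 := integrable_poly hb P
  have key := integral_eq_zero_of_hasDerivAt_of_integrable
    (f := fun z : ℝ => P.eval z * Real.exp (-(1 / (2 * τ)) * z ^ 2))
    (f' := fun z : ℝ => (derivative P).eval z * Real.exp (-(1 / (2 * τ)) * z ^ 2)
      - τ⁻¹ * ((X * P).eval z * Real.exp (-(1 / (2 * τ)) * z ^ 2))) ?_
      (i1.sub (i2.const_mul _)) i3
  · rw [integral_sub i1 (i2.const_mul _), integral_const_mul, sub_eq_zero] at key
    rw [key]
    field_simp
  · intro z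
    have h1 := P.hasDerivAt z
    have h2 : HasDerivAt (fun z : ℝ => Real.exp (-(1 / (2 * τ)) * z ^ 2))
        (Real.exp (-(1 / (2 * τ)) * z ^ 2) * (-(1 / (2 * τ)) * (2 * z))) z := by
      have := ((hasDerivAt_pow 2 z).const_mul (-(1 / (2 * τ)))).exp
      simpa using this
    refine (h1.mul h2).congr_deriv ?_
    simp only [eval_mul, eval_X]
    field_simp
    ring

lemma E_eval_eq {τ : ℝ} (hτ : 0 < τ) (x : ℝ) (Q : ℝ[X]) :
    (E τ Q).eval x * (∫ z : ℝ, Real.exp (-(1 / (2 * τ)) * z ^ 2))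
      = ∫ z : ℝ, (Q.comp (X + C x)).eval z * Real.exp (-(1 / (2 * τ)) * z ^ 2) := by
  have hb : 0 < 1 / (2 * τ) := by positivity
  have hadd : ∀ p q : ℝ[X],
     ∫ z : ℝ, (p + q).eval z * Real.exp (-(1 / (2 * τ)) * z ^ 2)
     = (∫ z : ℝ, p.eval z * Real.exp (-(1 / (2 * τ)) * z ^ 2))
      + ∫ z : ℝ, q.eval z * Real.exp (-(1 / (2 * τ)) * z ^ 2) := by
    intro p q
    rw [← integral_add (integrable_poly hb p) (integrable_poly hb q)]
    simp [add_mul]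
  have hC : ∀ (a : ℝ) (p : ℝ[X]),
     ∫ z : ℝ, (C a * p).eval z * Real.exp (-(1 / (2 * τ)) * z ^ 2)
     = a * (∫ z : ℝ, p.eval z * Real.exp (-(1 / (2 * τ)) * z ^ 2)) := by
    intro a p
    rw [← integral_const_mul]
    simp [mul_assoc]
  have hstep : ∀ p : ℝ[X], ((E τ p).eval x * (∫ z : ℝ, Real.exp (-(1 / (2 * τ)) * z ^ 2))
      = ∫ z : ℝ, (p.comp (X + C x)).eval z * Real.exp (-(1 / (2 * τ)) * z ^ 2)) →
      ((E τ (derivative p)).eval x * (∫ z : ℝ, Real.exp (-(1 / (2 * τ)) * z ^ 2))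
      = ∫ z : ℝ, ((derivative p).comp (X + C x)).eval z * Real.exp (-(1 / (2 * τ)) * z ^ 2)) →
      (E τ (X * p)).eval x * (∫ z : ℝ, Real.exp (-(1 / (2 * τ)) * z ^ 2))
      = ∫ z : ℝ, ((X * p).comp (X + C x)).eval z * Real.exp (-(1 / (2 * τ)) * z ^ 2) := by
    intro p hp1 hp2
    have e1 : ((X * p).comp (X + C x)) = X * p.comp (X + C x) + C x * p.comp (X + C x) := by
      simp only [mul_comp, X_comp]; ring
    have e2 : derivative (p.comp (X + C x)) = (derivative p).comp (X + C x) := by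
      simp [derivative_comp]
    rw [e1, hadd, stein hτ, hC, e2, ← hp1, ← hp2, E_X_mul, E_derivative]
    simp only [eval_add, eval_mul, eval_X, eval_C]
    ring
  have hCS : ∀ (a : ℝ) (p : ℝ[X]),
      ((E τ p).eval x * (∫ z : ℝ, Real.exp (-(1 / (2 * τ)) * z ^ 2))
      = ∫ z : ℝ, (p.comp (X + C x)).eval z * Real.exp (-(1 / (2 * τ)) * z ^ 2)) →
      ((E τ (C a * p)).eval x * (∫ z : ℝ, Real.exp (-(1 / (2 * τ)) * z ^ 2))
      = ∫ z : ℝ, ((C a * p).comp (X + C x)).eval z * Real.exp (-(1 / (2 * τ)) * z ^ 2)) := by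
    intro a p hp
    simp only [mul_comp, C_comp, hC, E_C_mul]
    rw [← hp]
    simp only [eval_mul, eval_C]
    ring
  have hpow : ∀ n : ℕ, ((E τ (X ^ n)).eval x * (∫ z : ℝ, Real.exp (-(1 / (2 * τ)) * z ^ 2))
      = ∫ z : ℝ, ((X ^ n : ℝ[X]).comp (X + C x)).eval z *
        Real.exp (-(1 / (2 * τ)) * z ^ 2)) := by
    intro n
    induction n using Nat.strong_induction_on with
    | _ n ih =>
      rcases n with _ | n
      · simp [E_one]
      · rw [pow_succ']
        refine hstep _ (ih n (by omega)) ?_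
        rw [derivative_X_pow]
        rcases n with _ | n
        · simp
        · exact hCS _ _ (ih _ (by omega))
  induction Q using Polynomial.induction_on' with
  | add p q hp hq =>
    simp only [map_add, add_comp, hadd]
    rw [← hp, ← hq]
    simp only [eval_add]
    ring
  | monomial n a => rw [← C_mul_X_pow_eq_monomial]; exact hCS _ _ (hpow n)

lemma E_pos {τ : ℝ} (hτ : 0 < τ) {h : ℝ[X]} (h0 : h ≠ 0) (hn : ∀ x, 0 ≤ h.eval x) (x : ℝ) :
    0 < (E τ h).eval x := by
  have hb : 0 < 1 / (2 * τ) := by positivity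
  have h1 : 0 < ∫ z : ℝ, Real.exp (-(1 / (2 * τ)) * z ^ 2) :=
    integral_exp_pos (integrable_exp_neg_mul_sq hb)
  refine pos_of_mul_pos_left (b := ∫ z : ℝ, Real.exp (-(1 / (2 * τ)) * z ^ 2)) ?_ h1.le
  rw [E_eval_eq hτ]
  obtain ⟨z, hz⟩ : ∃ z, h.eval z ≠ 0 := by
    by_contra! hc
    exact h0 (Polynomial.funext (by simpa using hc))
  refine integral_pos_of_integrable_nonneg_nonzero (x := z - x) ?_ (integrable_poly hb _) ?_ ?_
  · fun_prop
  · intro y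
    simp only [eval_comp, Pi.zero_apply]
    exact mul_nonneg (hn _) (Real.exp_pos _).le
  · simp [eval_comp, hz, Real.exp_ne_zero]


/-! Zero counting -/

lemma E_sub_mul (τ a : ℝ) (Q : ℝ[X]) :
    E τ ((X - C a) * Q) = (X - C a) * E τ Q + C τ * derivative (E τ Q) := by
  rw [sub_mul, map_sub, E_X_mul, E_C_mul]; ring

lemma rolle_finset {τ : ℝ} (hτ : 0 < τ) (a : ℝ) {p q : ℝ[X]} (hp : p ≠ 0) (hq : q ≠ 0)
    (hpq : q = (X - C a) * p + C τ * derivative p) :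
    p.roots.toFinset.card ≤ (q.roots.toFinset \ p.roots.toFinset).card + 1 := by
  refine Finset.card_le_sdiff_of_interleaved fun x hx y hy hxy hxy' => ?_
  rw [Multiset.mem_toFinset, mem_roots hp] at hx hy
  have hd : ∀ z : ℝ, HasDerivAt (fun z : ℝ => p.eval z * Real.exp ((z - a) ^ 2 / (2 * τ)))
      (τ⁻¹ * q.eval z * Real.exp ((z - a) ^ 2 / (2 * τ))) z := by
    intro z
    have h1 := p.hasDerivAt z
    have h2 := ((((hasDerivAt_id z).sub_const a).pow 2).div_const (2 * τ)).exp
    refine (h1.mul h2).congr_deriv ?_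
    simp only [hpq, eval_add, eval_mul, eval_sub, eval_X, eval_C, id, Pi.pow_apply]
    field_simp
    simp
    ring
  obtain ⟨z, hz1, hz2⟩ := exists_hasDerivAt_eq_zero
    (f := fun z : ℝ => p.eval z * Real.exp ((z - a) ^ 2 / (2 * τ))) hxy
    (fun z _ => (hd z).continuousAt.continuousWithinAt)
    (by simp only [hx.eq_zero, hy.eq_zero, zero_mul]) (fun z _ => hd z)
  refine ⟨z, ?_, hz1⟩
  rw [Multiset.mem_toFinset, mem_roots hq, IsRoot]
  simpa [hτ.ne', Real.exp_ne_zero] using hz2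

lemma rolle_mult {τ : ℝ} (a x : ℝ) {p q : ℝ[X]} (hq : q ≠ 0)
    (hpq : q = (X - C a) * p + C τ * derivative p) :
    p.rootMultiplicity x - 1 ≤ q.rootMultiplicity x := by
  rw [le_rootMultiplicity_iff hq, hpq]
  have h1 : (X - C x) ^ (p.rootMultiplicity x - 1) ∣ p :=
    (pow_dvd_pow _ (Nat.sub_le _ _)).trans (pow_rootMultiplicity_dvd p x)
  have h2 : (X - C x) ^ (p.rootMultiplicity x - 1) ∣ derivative p :=
    (pow_dvd_pow _ (rootMultiplicity_sub_one_le_derivative_rootMultiplicity p x)).trans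
      (pow_rootMultiplicity_dvd _ x)
  exact dvd_add (h1.mul_left _) (h2.mul_left _)

lemma rolle_card {τ : ℝ} (hτ : 0 < τ) (a : ℝ) {p q : ℝ[X]} (hp : p ≠ 0) (hq : q ≠ 0)
    (hpq : q = (X - C a) * p + C τ * derivative p) :
    Multiset.card p.roots ≤ Multiset.card q.roots + 1 :=
  calc
    Multiset.card p.roots = ∑ x ∈ p.roots.toFinset, p.roots.count x :=
      (Multiset.toFinset_sum_count_eq _).symm
    _ = ∑ x ∈ p.roots.toFinset, (p.roots.count x - 1 + 1) :=
      (Eq.symm <| Finset.sum_congr rfl fun _ hx => tsub_add_cancel_of_le <|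
        Nat.succ_le_iff.2 <| Multiset.count_pos.2 <| Multiset.mem_toFinset.1 hx)
    _ = (∑ x ∈ p.roots.toFinset, (p.rootMultiplicity x - 1)) + p.roots.toFinset.card := by
      simp only [Finset.sum_add_distrib, Finset.card_eq_sum_ones, count_roots]
    _ ≤ (∑ x ∈ p.roots.toFinset, q.rootMultiplicity x) +
          ((q.roots.toFinset \ p.roots.toFinset).card + 1) :=
      (add_le_add
        (Finset.sum_le_sum fun _ _ => rolle_mult a _ hq hpq)
        (rolle_finset hτ a hp hq hpq))
    _ ≤ (∑ x ∈ p.roots.toFinset, q.roots.count x) +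
          ((∑ x ∈ q.roots.toFinset \ p.roots.toFinset,
            q.roots.count x) + 1) := by
      simp only [← count_roots, Finset.card_eq_sum_ones]
      gcongr with x hx
      rw [Nat.succ_le_iff, Multiset.count_pos, ← Multiset.mem_toFinset]
      exact (Finset.mem_sdiff.1 hx).1
    _ = Multiset.card q.roots + 1 := by
      rw [← add_assoc, ← Finset.sum_union Finset.disjoint_sdiff, Finset.union_sdiff_self_eq_union, ←
        Multiset.toFinset_sum_count_eq, ← Finset.sum_subset Finset.subset_union_right]
      intro x _ hx₂
      simpa only [Multiset.mem_toFinset, Multiset.count_eq_zero] using hx₂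

/-- Variation diminishing property. -/
lemma vd {τ : ℝ} (hτ : 0 < τ) (s : Multiset ℝ) : ∀ {h : ℝ[X]}, h ≠ 0 → (∀ x, 0 ≤ h.eval x) →
    Multiset.card (E τ (h * (s.map fun a => X - C a).prod)).roots ≤ Multiset.card s := by
  induction s using Multiset.induction_on with
  | empty =>
    intro h h0 hn
    simp only [Multiset.map_zero, Multiset.prod_zero, mul_one, Multiset.card_zero, nonpos_iff_eq_zero,
      Multiset.card_eq_zero]
    refine Multiset.eq_zero_of_forall_notMem fun x hx => ?_
    have := (mem_roots'.1 hx).2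
    exact (E_pos hτ h0 hn x).ne' this
  | cons a s ih =>
    intro h h0 hn
    have hs : (s.map fun a => (X - C a : ℝ[X])).prod ≠ 0 :=
      (monic_multiset_prod_of_monic s _ (fun a _ => monic_X_sub_C a)).ne_zero
    have hQ : h * ((a ::ₘ s).map fun a => X - C a).prod ≠ 0 := by
      rw [Multiset.map_cons, Multiset.prod_cons]
      exact mul_ne_zero h0 (mul_ne_zero (X_sub_C_ne_zero a) hs)
    have h1 := rolle_card hτ a (E_ne_zero (τ := τ) hQ)
      (E_ne_zero (τ := τ) (mul_ne_zero (X_sub_C_ne_zero a) hQ)) (E_sub_mul τ a _)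
    have h2 := ih (h := h * (X - C a) ^ 2) (mul_ne_zero h0 (pow_ne_zero _ (X_sub_C_ne_zero a)))
      (by
        intro x
        simp only [eval_mul, eval_pow]
        exact mul_nonneg (hn x) (sq_nonneg _))
    have e : (X - C a) * (h * ((a ::ₘ s).map fun a => X - C a).prod)
        = h * (X - C a) ^ 2 * (s.map fun a => X - C a).prod := by
      rw [Multiset.map_cons, Multiset.prod_cons]; ring
    rw [e] at h1
    rw [Multiset.card_cons]
    omega

/-- A real polynomial without real roots has constant sign. -/
lemma sign_of_no_roots {g : ℝ[X]} (h0 : g ≠ 0) (hg : g.roots = 0) :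
    (∀ x, 0 ≤ g.eval x) ∨ (∀ x, 0 ≤ (-g).eval x) := by
  by_contra! hc
  obtain ⟨⟨x, hx⟩, ⟨y, hy⟩⟩ := hc
  rw [eval_neg] at hy
  obtain ⟨z, hz⟩ := mem_range_of_exists_le_of_exists_ge (c := (0 : ℝ)) g.continuous
    ⟨x, hx.le⟩ ⟨y, by linarith⟩
  have : z ∈ g.roots := (mem_roots h0).2 hz
  simp [hg] at this

lemma vd_sq {τ : ℝ} (hτ : 0 < τ) {S G : ℝ[X]} (hS : S ≠ 0) (hG : G ≠ 0) :
    Multiset.card (E τ (S ^ 2 * G)).roots ≤ Multiset.card G.roots := by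
  obtain ⟨g, hg, -, hgr⟩ := exists_prod_multiset_X_sub_C_mul G
  have hg0 : g ≠ 0 := by
    rintro rfl
    exact hG (by simpa using hg.symm)
  rcases sign_of_no_roots hg0 hgr with h | h
  · have := vd hτ G.roots (h := S ^ 2 * g) (mul_ne_zero (pow_ne_zero _ hS) hg0) (by
      intro x
      simp only [eval_mul, eval_pow]
      exact mul_nonneg (sq_nonneg _) (h x))
    rwa [mul_assoc, mul_comm g, hg] at this
  · have := vd hτ G.roots (h := S ^ 2 * (-g))
      (mul_ne_zero (pow_ne_zero _ hS) (neg_ne_zero.2 hg0)) (by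
      intro x
      simp only [eval_mul, eval_pow]
      exact mul_nonneg (sq_nonneg _) (h x))
    rwa [mul_assoc, neg_mul, mul_comm g, hg, mul_neg, map_neg, roots_neg] at this

lemma prod_sq_dvd {F : ℝ[X]} (A : Finset ℝ) (hA : ∀ z ∈ A, (X - C z) ^ 2 ∣ F) :
    (∏ z ∈ A, (X - C z)) ^ 2 ∣ F := by
  rw [← Finset.prod_pow]
  refine Finset.prod_dvd_of_coprime ?_ hA
  intro x _ y _ hxy
  exact (isCoprime_X_sub_C_of_isUnit_sub (sub_ne_zero.2 hxy).isUnit).pow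

lemma card_roots_prod_sq_mul (A : Finset ℝ) {G : ℝ[X]} (hG : G ≠ 0) :
    Multiset.card ((∏ z ∈ A, (X - C z)) ^ 2 * G).roots = 2 * A.card + Multiset.card G.roots := by
  have hS : (∏ z ∈ A, (X - C z : ℝ[X])) ≠ 0 := (monic_prod_X_sub_C _ A).ne_zero
  rw [roots_mul (mul_ne_zero (pow_ne_zero _ hS) hG), roots_pow, roots_prod_X_sub_C]
  simp

lemma drop {τ : ℝ} (hτ : 0 < τ) {F : ℝ[X]} (hF : F ≠ 0) (A : Finset ℝ)
    (hA : ∀ z ∈ A, (X - C z) ^ 2 ∣ F) :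
    Multiset.card (E τ F).roots + 2 * A.card ≤ Multiset.card F.roots := by
  have hS : (∏ z ∈ A, (X - C z : ℝ[X])) ≠ 0 := (monic_prod_X_sub_C _ A).ne_zero
  obtain ⟨G, rfl⟩ := prod_sq_dvd A hA
  have hG : G ≠ 0 := by
    rintro rfl
    simp at hF
  rw [card_roots_prod_sq_mul A hG]
  have := vd_sq hτ hS hG
  omega

/-- Points are pairs `(location, time)`. -/
lemma count {Q : ℝ[X]} (hQ : Q ≠ 0) (P : Finset (ℝ × ℝ))
    (hP : ∀ p ∈ P, (X - C p.1) ^ 2 ∣ E p.2 Q) : ∀ (n : ℕ) (t : ℝ),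
    (P.filter fun p => p.2 < t).card = n →
    Multiset.card (E t Q).roots + 2 * n ≤ Q.natDegree := by
  intro n
  induction n using Nat.strong_induction_on with
  | _ n ih =>
    intro t hn
    rcases Finset.eq_empty_or_nonempty (P.filter fun p => p.2 < t) with he | hne
    · rw [he, Finset.card_empty] at hn
      subst hn
      simpa using (card_roots' _).trans (natDegree_E_le t Q)
    · obtain ⟨m, hm, hmax⟩ := Finset.exists_max_image _ (fun p : ℝ × ℝ => p.2) hne
      rw [Finset.mem_filter] at hm
      have hlt : (P.filter fun p => p.2 < m.2) ⊆ (P.filter fun p => p.2 < t) := by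
        intro p hp
        rw [Finset.mem_filter] at hp ⊢
        exact ⟨hp.1, hp.2.trans hm.2⟩
      have hsplit : (P.filter fun p => p.2 < t)
          = (P.filter fun p => p.2 < m.2) ∪ (P.filter fun p => p.2 = m.2) := by
        ext p
        simp only [Finset.mem_filter, Finset.mem_union]
        constructor
        · rintro ⟨h1, h2⟩
          have := hmax p (Finset.mem_filter.2 ⟨h1, h2⟩)
          rcases this.lt_or_eq with h | h
          · exact Or.inl ⟨h1, h⟩
          · exact Or.inr ⟨h1, h⟩
        · rintro (⟨h1, h2⟩ | ⟨h1, h2⟩)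
          · exact ⟨h1, h2.trans hm.2⟩
          · exact ⟨h1, h2 ▸ hm.2⟩
      have hdisj : Disjoint (P.filter fun p => p.2 < m.2) (P.filter fun p => p.2 = m.2) := by
        rw [Finset.disjoint_filter]
        intro p _ h1 h2
        exact h1.ne h2
      have hcard : n = (P.filter fun p => p.2 < m.2).card + (P.filter fun p => p.2 = m.2).card := by
        rw [← hn, hsplit, Finset.card_union_of_disjoint hdisj]
      have hpos : 0 < (P.filter fun p => p.2 = m.2).card :=
        Finset.card_pos.2 ⟨m, Finset.mem_filter.2 ⟨hm.1, rfl⟩⟩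
      have h1 := ih _ (by omega) m.2 rfl
      have hA : ((P.filter fun p => p.2 = m.2).image Prod.fst).card
          = (P.filter fun p => p.2 = m.2).card := by
        refine Finset.card_image_of_injOn ?_
        intro p hp q hq hpq
        have hp := (Finset.mem_filter.1 hp).2
        have hq := (Finset.mem_filter.1 hq).2
        exact Prod.ext hpq (hp.trans hq.symm)
      have h2 := drop (τ := t - m.2) (sub_pos.2 hm.2) (E_ne_zero (τ := m.2) hQ)
        ((P.filter fun p => p.2 = m.2).image Prod.fst) (by
          intro z hz
          obtain ⟨p, hp, rfl⟩ := Finset.mem_image.1 hz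
          have hp := Finset.mem_filter.1 hp
          rw [← hp.2]
          exact hP p hp.1)
      rw [E_add_time, sub_add_cancel, hA] at h2
      omega

lemma exists_poly (P : Finset (ℝ × ℝ)) : ∃ Q : ℝ[X], Q ≠ 0 ∧ Q.natDegree ≤ 2 * P.card ∧
    ∀ p ∈ P, (X - C p.1) ^ 2 ∣ E p.2 Q := by
  let f : degreeLT ℝ (2 * P.card + 1) →ₗ[ℝ] (P × Fin 2 → ℝ) :=
    (LinearMap.pi fun i : P × Fin 2 =>
      (Polynomial.leval i.1.1.1).comp
        ((if i.2 = 0 then LinearMap.id else (Polynomial.derivative : ℝ[X] →ₗ[ℝ] ℝ[X])).comp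
          (E i.1.1.2))).comp (degreeLT ℝ (2 * P.card + 1)).subtype
  have hfin : Module.finrank ℝ (degreeLT ℝ (2 * P.card + 1)) = 2 * P.card + 1 := by
    rw [(degreeLTEquiv ℝ (2 * P.card + 1)).finrank_eq]; simp
  have : Module.Finite ℝ (degreeLT ℝ (2 * P.card + 1)) :=
    Module.finite_of_finrank_pos (by omega)
  have hker : LinearMap.ker f ≠ ⊥ := LinearMap.ker_ne_bot_of_finrank_lt (by
    rw [hfin]; simp; omega)
  obtain ⟨Q, hQ, hQ0⟩ := (Submodule.ne_bot_iff _).1 hker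
  refine ⟨Q.1, fun h => hQ0 (Subtype.ext h), ?_, ?_⟩
  · have := mem_degreeLT.1 Q.2
    have := (natDegree_lt_iff_degree_lt (fun h => hQ0 (Subtype.ext h))).2 this
    omega
  · intro p hp
    have h0 := congrFun (LinearMap.mem_ker.1 hQ) (⟨p, hp⟩, 0)
    have h1 := congrFun (LinearMap.mem_ker.1 hQ) (⟨p, hp⟩, 1)
    simp [f] at h0 h1
    obtain ⟨G, hG⟩ := dvd_iff_isRoot.2 (show (E p.2 Q.1).IsRoot p.1 from h0)
    rw [hG] at h1 ⊢
    simp at h1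
    rw [sq]
    exact mul_dvd_mul_left _ (dvd_iff_isRoot.2 h1)

lemma separate (P : Finset (ℝ × ℝ)) (y t : ℝ) (hy : (y, t) ∉ P) (ht : ∀ p ∈ P, p.2 ≤ t) :
    ∃ Q : ℝ[X], Q.natDegree ≤ 2 * P.card ∧ (∀ p ∈ P, (E p.2 Q).eval p.1 = 0) ∧
      (E t Q).eval y ≠ 0 := by
  obtain ⟨Q, hQ0, hdeg, hQ⟩ := exists_poly P
  refine ⟨Q, hdeg, ?_, ?_⟩
  · intro p hp
    exact dvd_iff_isRoot.1 ((dvd_pow_self _ two_ne_zero).trans (hQ p hp))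
  · intro hroot
    obtain ⟨G, hG⟩ := prod_sq_dvd (F := E t Q) ((P.filter fun p => p.2 = t).image Prod.fst) (by
      intro z hz
      obtain ⟨p, hp, rfl⟩ := Finset.mem_image.1 hz
      have hp := Finset.mem_filter.1 hp
      rw [← hp.2]
      exact hQ p hp.1)
    have hG0 : G ≠ 0 := by
      rintro rfl
      exact E_ne_zero hQ0 (by simpa using hG)
    have hyG : y ∈ G.roots := by
      rw [mem_roots hG0, IsRoot]
      rw [hG, eval_mul, eval_pow, eval_prod] at hroot
      rcases mul_eq_zero.1 hroot with h | h
      · exfalso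
        obtain ⟨z, hz, hz0⟩ := Finset.prod_eq_zero_iff.1 (pow_eq_zero_iff two_ne_zero |>.1 h)
        obtain ⟨p, hp, rfl⟩ := Finset.mem_image.1 hz
        have hp := Finset.mem_filter.1 hp
        have : y = p.1 := by simpa [sub_eq_zero] using hz0
        exact hy (by rw [this, ← hp.2]; exact hp.1)
      · exact h
    have hGc : 0 < Multiset.card G.roots := Multiset.card_pos_iff_exists_mem.2 ⟨y, hyG⟩
    have hA : ((P.filter fun p => p.2 = t).image Prod.fst).card
        = (P.filter fun p => p.2 = t).card := by
      refine Finset.card_image_of_injOn ?_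
      intro p hp q hq hpq
      have hp := (Finset.mem_filter.1 hp).2
      have hq := (Finset.mem_filter.1 hq).2
      exact Prod.ext hpq (hp.trans hq.symm)
    have h1 := card_roots_prod_sq_mul ((P.filter fun p => p.2 = t).image Prod.fst) hG0
    rw [← hG, hA] at h1
    have h2 := count hQ0 P hQ _ t rfl
    have h3 : P.card = (P.filter fun p => p.2 < t).card + (P.filter fun p => p.2 = t).card := by
      rw [← Finset.card_union_of_disjoint]
      · congr 1
        ext p
        simp only [Finset.mem_union, Finset.mem_filter]
        constructor
        · intro hp
          rcases (ht p hp).lt_or_eq with h | h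
          · exact Or.inl ⟨hp, h⟩
          · exact Or.inr ⟨hp, h⟩
        · rintro (h | h) <;> exact h.1
      · rw [Finset.disjoint_filter]
        intro p _ h1 h2
        exact h1.ne h2
    omega

/-- A signed measure on few points that kills all heat polynomials vanishes. -/
lemma unique (d : ℝ × ℝ →₀ ℝ) (hd : d.support.card ≤ 4)
    (h : ∀ Q : ℝ[X], Q.natDegree ≤ 6 → d.sum (fun p a => a * (E p.2 Q).eval p.1) = 0) : d = 0 := by
  by_contra hne
  obtain ⟨m, hm, hmax⟩ := Finset.exists_max_image d.support (fun p : ℝ × ℝ => p.2)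
    (Finsupp.support_nonempty_iff.2 hne)
  have hcard := Finset.card_erase_of_mem hm
  obtain ⟨Q, hQ1, hQ2, hQ3⟩ := separate (d.support.erase m) m.1 m.2 (by simp)
    (fun p hp => hmax p (Finset.mem_of_mem_erase hp))
  have := h Q (by omega)
  rw [Finsupp.sum, Finset.sum_eq_single m] at this
  · rcases mul_eq_zero.1 this with h | h
    · exact Finsupp.mem_support_iff.1 hm h
    · exact hQ3 h
  · intro p hp hpm
    rw [hQ2 p (Finset.mem_erase.2 ⟨hpm, hp⟩), mul_zero]
  · intro h; exact absurd hm h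

end HeatPoly

theorem no_nontrivial_solution_m_three_r_six
    (p₃ p₄ c : Fin 3 → ℝ) (hc : ∀ j, 0 < c j)
    (h : ∀ ℓ : ℕ, 1 ≤ ℓ → ℓ ≤ 6 →
      ∑ j, ∑ α₄ ∈ Finset.range (ℓ / 2 + 1),
        c j * p₃ j ^ (ℓ - 2 * α₄) * p₄ j ^ α₄ /
          ((Nat.factorial (ℓ - 2 * α₄) : ℝ) * (Nat.factorial α₄ : ℝ)) = 0) :
    ∀ j, p₃ j = 0 ∧ p₄ j = 0 := by
  classical
  set d : ℝ × ℝ →₀ ℝ := (∑ j, Finsupp.single (p₃ j, 2 * p₄ j) (c j))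
    + Finsupp.single (0, 0) (-∑ j, c j) with hd
  have hsupp : d.support.card ≤ 4 := by
    have hs : d.support ⊆ {(p₃ 0, 2 * p₄ 0), (p₃ 1, 2 * p₄ 1), (p₃ 2, 2 * p₄ 2), (0, 0)} := by
      intro p hp
      by_contra hn
      simp only [Finset.mem_insert, Finset.mem_singleton, not_or] at hn
      obtain ⟨h0, h1, h2, h3⟩ := hn
      apply Finsupp.mem_support_iff.1 hp
      simp [hd, Fin.sum_univ_three, Finsupp.single_apply, Ne.symm h0, Ne.symm h1, Ne.symm h2,
        Ne.symm h3]
    exact (Finset.card_le_card hs).trans Finset.card_le_four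
  have hsum : ∀ Q : Polynomial ℝ, d.sum (fun p a => a * (HeatPoly.E p.2 Q).eval p.1)
      = ∑ j, c j * (HeatPoly.E (2 * p₄ j) Q).eval (p₃ j)
        - (∑ j, c j) * (HeatPoly.E 0 Q).eval 0 := by
    intro Q
    have hz : ∀ p : ℝ × ℝ, (0 : ℝ) * (HeatPoly.E p.2 Q).eval p.1 = 0 := fun p => zero_mul _
    have ha : ∀ (p : ℝ × ℝ) (a b : ℝ), (a + b) * (HeatPoly.E p.2 Q).eval p.1
        = a * (HeatPoly.E p.2 Q).eval p.1 + b * (HeatPoly.E p.2 Q).eval p.1 :=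
      fun p a b => add_mul _ _ _
    rw [hd, Fin.sum_univ_three, Finsupp.sum_add_index' hz ha, Finsupp.sum_add_index' hz ha,
      Finsupp.sum_add_index' hz ha, Finsupp.sum_single_index (hz _), Finsupp.sum_single_index (hz _),
      Finsupp.sum_single_index (hz _), Finsupp.sum_single_index (hz _), Fin.sum_univ_three, Fin.sum_univ_three]
    ring
  have hpow : ∀ ℓ : ℕ, ℓ ≤ 6 → ∑ j, c j * (HeatPoly.E (2 * p₄ j) (Polynomial.X ^ ℓ)).eval (p₃ j)
        - (∑ j, c j) * (HeatPoly.E 0 (Polynomial.X ^ ℓ)).eval 0 = 0 := by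
    intro ℓ hℓ
    rw [HeatPoly.E_zero_time]
    rcases Nat.eq_zero_or_pos ℓ with rfl | hpos
    · simp [HeatPoly.E_one]
    · have h1 := h ℓ hpos hℓ
      have h2 : ∑ j, c j * (HeatPoly.E (2 * p₄ j) (Polynomial.X ^ ℓ)).eval (p₃ j)
        = (ℓ.factorial : ℝ) * ∑ j, ∑ α₄ ∈ Finset.range (ℓ / 2 + 1),
        c j * p₃ j ^ (ℓ - 2 * α₄) * p₄ j ^ α₄ /
          ((Nat.factorial (ℓ - 2 * α₄) : ℝ) * (Nat.factorial α₄ : ℝ)) := by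
        rw [Finset.mul_sum]
        refine Finset.sum_congr rfl fun j _ => ?_
        clear h1 hsum hsupp h
        interval_cases ℓ <;>
        · simp only [pow_succ', pow_zero, HeatPoly.E_X_mul, HeatPoly.E_one]
          simp [Finset.sum_range_succ, Nat.factorial]
          try ring
      rw [h2, h1]
      simp [hpos.ne']
  have hd0 : d = 0 := by
    refine HeatPoly.unique d hsupp fun Q hQ => ?_
    rw [hsum, Q.as_sum_range_C_mul_X_pow' (n := 7) (by omega)]
    simp only [map_sum, HeatPoly.E_C_mul, Polynomial.eval_finsetSum, Polynomial.eval_mul,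
      Polynomial.eval_C]
    have e : ∀ i ∈ Finset.range 7, Q.coeff i *
        (∑ j, c j * (HeatPoly.E (2 * p₄ j) (Polynomial.X ^ i)).eval (p₃ j)
        - (∑ j, c j) * (HeatPoly.E 0 (Polynomial.X ^ i)).eval 0) = 0 := by
      intro i hi
      rw [hpow i (by have := Finset.mem_range.1 hi; omega), mul_zero]
    refine Eq.trans ?_ (Finset.sum_eq_zero e)
    simp only [mul_sub, Finset.sum_sub_distrib, Finset.mul_sum]
    rw [Finset.sum_comm]
    congr 1
    · refine Finset.sum_congr rfl fun i _ => Finset.sum_congr rfl fun j _ => ?_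
      ring
    · refine Finset.sum_congr rfl fun i _ => ?_
      ring
  intro j
  by_contra hj
  have hne : ((0 : ℝ), (0 : ℝ)) ≠ (p₃ j, 2 * p₄ j) := by
    intro he
    rw [Prod.mk.injEq] at he
    exact hj ⟨he.1.symm, by linarith [he.2]⟩
  have hv : d (p₃ j, 2 * p₄ j) = 0 := by rw [hd0]; rfl
  rw [hd, Finsupp.add_apply, Finsupp.single_eq_of_ne hne.symm, add_zero, Finsupp.finsetSum_apply] at hv
  have := (Finset.sum_eq_zero_iff_of_nonneg (fun i _ => by
    rw [Finsupp.single_apply]; split_ifs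
    · exact (hc i).le
    · exact le_rfl)).1 hv j (Finset.mem_univ j)
  rw [Finsupp.single_eq_same] at this
  exact (hc j).ne' this
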